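/- Let (X, ·) be a square-free cycle set which is multipermutation of level m, with cardinality N. Define f : X × X → ℤ/2ℤ by f(x,y) = 0 if x = y and f(x,y) = 1 if x ≠ y. Then f is a 2-cocycle, and the cycle set Y := ℤ/2ℤ ×_f X (with operation (α,x)·(β,y) = (β + f(x,y), x·y)) is a square-free cycle set of cardinality 2N which is multipermutation of level m+1; moreover the projection (α, x) ↦ x induces a cycle-set isomorphism Ret(Y) ≅ X. -/

import Mathlib

universe u

/-- The retraction equivalence relation on a cycle set:
`a ≈ a'` iff `a·b = a'·b` for all `b`. -/
def retSetoid {X : Type u} (op : X → X → X) : Setoid X :=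
  ⟨fun a a' => ∀ b, op a b = op a' b,
    ⟨fun _ _ => rfl, fun h b => (h b).symm, fun h1 h2 b => (h1 b).trans (h2 b)⟩⟩

/-- The induced operation on the retraction quotient (defined via choice of
representatives; for non-degenerate cycle sets it is well defined on classes
and satisfies `retOp op ⟦a⟧ ⟦b⟧ = ⟦op a b⟧`). -/
noncomputable def retOp {X : Type u} (op : X → X → X) :
    Quotient (retSetoid op) → Quotient (retSetoid op) → Quotient (retSetoid op) :=
  fun q q' => Quotient.mk (retSetoid op) (op q.out q'.out)

/-- The `n`-fold iterated retraction `Retⁿ(X)`, as a pair (carrier, operation). -/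
noncomputable def retIter (X : Type u) (op : X → X → X) :
    ℕ → (Y : Type u) × (Y → Y → Y)
  | 0 => ⟨X, op⟩
  | n + 1 =>
      ⟨Quotient (retSetoid (retIter X op n).2), retOp (retIter X op n).2⟩

/-- `(X, op)` is multipermutation of level `m`: `m` is the minimal number of
retractions turning `X` into a one-element set. -/
def IsMPLevel (X : Type u) (op : X → X → X) (m : ℕ) : Prop :=
  (Nonempty (retIter X op m).1 ∧ Subsingleton (retIter X op m).1) ∧
  ∀ n : ℕ, (Nonempty (retIter X op n).1 ∧ Subsingleton (retIter X op n).1) →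
    m ≤ n

/-!
A cocycle `f` for which distinct points `x` have distinct functions `f (x, ·)` turns `X` into the
retraction of `A ×_f X`: the translation by `(α, x)` ignores `α` and remembers `x` through its
action on the `A`-coordinate. One more retraction is then needed to reach a point.
A map `f` that is `0` on the diagonal and a constant `c` off it is invariant under injective maps of
`X`, in particular under left translations, so the cocycle identity reduces to commutativity
of addition; it separates points as soon as `c ≠ 0`.
-/

universe v

/-- The cycle set laws with left translations only required to be surjective. Unlike
bijectivity, surjectivity passes to the retraction without any non-degeneracy assumption, and it
is all that well-definedness of the retraction needs. -/
structure IsSurjCycleSet {X : Type u} (op : X → X → X) : Prop where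
  surjective : ∀ a, Function.Surjective (op a)
  cycle : ∀ a b c, op (op a b) (op a c) = op (op b a) (op b c)

section Retraction

variable {X : Type u} {X' : Type v} {op : X → X → X} {op' : X' → X' → X'}

namespace IsSurjCycleSet

theorem retOp_mk (h : IsSurjCycleSet op) (a b : X) :
    retOp op (Quotient.mk _ a) (Quotient.mk _ b) = Quotient.mk _ (op a b) := by
  have out_op : ∀ x c, op (Quotient.mk (retSetoid op) x).out c = op x c := fun x =>
    Quotient.mk_out (s := retSetoid op) x
  refine Quotient.sound fun c => ?_
  obtain ⟨d, rfl⟩ := h.surjective a c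
  rw [out_op a, h.cycle a _ d, out_op b, out_op b, h.cycle b a d]

theorem ret (h : IsSurjCycleSet op) : IsSurjCycleSet (retOp op) where
  surjective := by
    rintro ⟨a⟩ ⟨b⟩
    obtain ⟨d, rfl⟩ := h.surjective a b
    exact ⟨Quotient.mk _ d, h.retOp_mk a d⟩
  cycle p q r := by
    induction p, q, r using Quotient.inductionOn₃ with
    | _ a b c => simp only [h.retOp_mk, h.cycle a b c]

theorem retIter (h : IsSurjCycleSet op) : ∀ n, IsSurjCycleSet (retIter X op n).2
  | 0 => h
  | n + 1 => (h.retIter n).ret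

theorem of_equiv (h : IsSurjCycleSet op) (e : X ≃ X') (he : Function.Semiconj₂ e op op') :
    IsSurjCycleSet op' where
  surjective := e.surjective.forall.mpr fun a => e.surjective.forall.mpr fun b => by
    obtain ⟨d, rfl⟩ := h.surjective a b
    exact ⟨e d, (he.eq a d).symm⟩
  cycle := by
    simp only [e.surjective.forall, ← he.eq, h.cycle, implies_true]

end IsSurjCycleSet

theorem retSetoid_iff_of_equiv (e : X ≃ X') (he : Function.Semiconj₂ e op op') (a b : X) :
    retSetoid op a b ↔ retSetoid op' (e a) (e b) := by
  change (∀ c, op a c = op b c) ↔ ∀ c, op' (e a) c = op' (e b) c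
  simp only [e.surjective.forall, ← he.eq, e.apply_eq_iff_eq]

theorem exists_ret_equiv (h : IsSurjCycleSet op) (e : X ≃ X')
    (he : Function.Semiconj₂ e op op') :
    ∃ e' : Quotient (retSetoid op) ≃ Quotient (retSetoid op'),
      Function.Semiconj₂ e' (retOp op) (retOp op') := by
  refine ⟨Quotient.congr e (retSetoid_iff_of_equiv e he), ?_⟩
  rintro ⟨a⟩ ⟨b⟩
  calc Quotient.congr e _ (retOp op (Quotient.mk _ a) (Quotient.mk _ b))
      = Quotient.mk _ (e (op a b)) := by rw [h.retOp_mk, Quotient.congr_mk]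
    _ = retOp op' (Quotient.mk _ (e a)) (Quotient.mk _ (e b)) := by
        rw [he.eq, (h.of_equiv e he).retOp_mk]

theorem exists_retIter_equiv (h : IsSurjCycleSet op) (e : X ≃ X')
    (he : Function.Semiconj₂ e op op') (n : ℕ) :
    ∃ e' : (retIter X op n).1 ≃ (retIter X' op' n).1,
      Function.Semiconj₂ e' (retIter X op n).2 (retIter X' op' n).2 := by
  induction n with
  | zero => exact ⟨e, he⟩
  | succ n ih =>
    obtain ⟨e', he'⟩ := ih
    exact exists_ret_equiv (h.retIter n) e' he'

theorem retIter_succ_eq_retIter_ret (op : X → X → X) (n : ℕ) :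
    retIter X op (n + 1) = retIter (Quotient (retSetoid op)) (retOp op) n := by
  induction n with
  | zero => rfl
  | succ n ih =>
    exact congrArg (fun Y : (Y : Type u) × (Y → Y → Y) =>
      (⟨Quotient (retSetoid Y.2), retOp Y.2⟩ : (Y : Type u) × (Y → Y → Y))) ih

theorem nonempty_retIter_iff (op : X → X → X) (n : ℕ) :
    Nonempty (retIter X op n).1 ↔ Nonempty X := by
  induction n with
  | zero => rfl
  | succ n ih => exact (nonempty_quotient_iff _).trans ih

variable {m : ℕ}

theorem isMPLevel_congr (hop : IsSurjCycleSet op) (e : X ≃ X')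
    (he : Function.Semiconj₂ e op op') : IsMPLevel X op m ↔ IsMPLevel X' op' m := by
  have singleton_iff (n : ℕ) :
      (Nonempty (retIter X op n).1 ∧ Subsingleton (retIter X op n).1) ↔
        Nonempty (retIter X' op' n).1 ∧ Subsingleton (retIter X' op' n).1 := by
    obtain ⟨e', -⟩ := exists_retIter_equiv hop e he n
    rw [e'.nonempty_congr, e'.subsingleton_congr]
  simp only [IsMPLevel, singleton_iff]

namespace IsMPLevel

theorem nonempty (h : IsMPLevel X op m) : Nonempty X :=
  (nonempty_retIter_iff op m).mp h.1.1

theorem succ_of_ret [Nontrivial X] (h : IsMPLevel (Quotient (retSetoid op)) (retOp op) m) :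
    IsMPLevel X op (m + 1) := by
  refine ⟨?_, ?_⟩
  · rw [retIter_succ_eq_retIter_ret]
    exact h.1
  · rintro (_ | n) hn
    · exact absurd hn.2 (not_subsingleton X)
    · rw [retIter_succ_eq_retIter_ret] at hn
      exact Nat.succ_le_succ (h.2 n hn)

end IsMPLevel

end Retraction

section Extension

variable {X : Type u} {A : Type v} {op : X → X → X} {f : X × X → A}

/-- `f` is a 2-cocycle of `(X, op)` with values in `A`; only the addition of `A` is needed to
state this. -/
def IsTwoCocycle [Add A] (op : X → X → X) (f : X × X → A) : Prop :=
  ∀ x y z, f (x, z) + f (op x y, op x z) = f (y, z) + f (op y x, op y z)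

/-- The operation of the extension `A ×_f X`, defined for an arbitrary map `f`; it satisfies the
cycle set identity when `f` is a 2-cocycle. -/
def extOp [Add A] (op : X → X → X) (f : X × X → A) (u v : A × X) : A × X :=
  (v.1 + f (u.2, v.2), op u.2 v.2)

variable [AddGroup A]

theorem extOp_injective {u : A × X} (h : Function.Injective (op u.2)) :
    Function.Injective (extOp op f u) := by
  rintro ⟨β, y⟩ ⟨γ, z⟩ hyz
  obtain ⟨hfst, hsnd⟩ := Prod.mk.inj hyz
  obtain rfl : y = z := h hsnd
  exact congrArg (·, y) (add_right_cancel hfst)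

theorem extOp_surjective {u : A × X} (h : Function.Surjective (op u.2)) :
    Function.Surjective (extOp op f u) := by
  rintro ⟨γ, z⟩
  obtain ⟨y, rfl⟩ := h z
  exact ⟨(γ - f (u.2, y), y), by simp only [extOp, sub_add_cancel]⟩

theorem extOp_self {u : A × X} (hf : f (u.2, u.2) = 0) (hop : op u.2 u.2 = u.2) :
    extOp op f u u = u := by
  simp only [extOp, hf, hop, add_zero]

theorem IsSurjCycleSet.extOp (h : IsSurjCycleSet op) (hf : IsTwoCocycle op f) :
    IsSurjCycleSet (extOp op f) where
  surjective u := extOp_surjective (h.surjective u.2)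
  cycle u v w := by
    simp only [_root_.extOp, add_assoc, hf u.2 v.2 w.2, h.cycle u.2 v.2 w.2]

theorem retSetoid_extOp_iff (hf : Function.Injective (Function.curry f)) (u v : A × X) :
    retSetoid (extOp op f) u v ↔ u.2 = v.2 := by
  refine ⟨fun h => hf (funext fun z => ?_), fun h w => by simp only [extOp, h]⟩
  exact add_left_cancel (congrArg Prod.fst (h (0, z)))

/-- The bijection `Ret(A ×_f X) ≃ X` induced by the projection, for `f` separating the points of
`X` in its first argument. -/
def retExtEquiv (op : X → X → X) (hf : Function.Injective (Function.curry f)) :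
    Quotient (retSetoid (extOp op f)) ≃ X :=
  (Quotient.congrRight (retSetoid_extOp_iff hf)).trans
    (Setoid.quotientKerEquivOfRightInverse Prod.snd (fun x => ((0 : A), x)) fun _ => rfl)

theorem retExtEquiv_mk (hf : Function.Injective (Function.curry f)) (u : A × X) :
    retExtEquiv op hf (Quotient.mk _ u) = u.2 :=
  rfl

theorem semiconj₂_retExtEquiv (hf : Function.Injective (Function.curry f))
    (h : IsSurjCycleSet (extOp op f)) :
    Function.Semiconj₂ (retExtEquiv op hf) (retOp (extOp op f)) op := by
  rintro ⟨u⟩ ⟨v⟩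
  exact congrArg (retExtEquiv op hf) (h.retOp_mk u v)

theorem IsMPLevel.extOp [Nontrivial A] {m : ℕ} (hm : IsMPLevel X op m) (h : IsSurjCycleSet op)
    (hf : IsTwoCocycle op f) (hf_inj : Function.Injective (Function.curry f)) :
    IsMPLevel (A × X) (extOp op f) (m + 1) := by
  have : Nonempty X := hm.nonempty
  have hext : IsSurjCycleSet (_root_.extOp op f) := h.extOp hf
  exact succ_of_ret <|
    (isMPLevel_congr hext.ret _ (semiconj₂_retExtEquiv hf_inj hext)).mpr hm

end Extension

section OffDiagonal

variable {X : Type u} {A : Type v} {op : X → X → X} {f : X × X → A} {c : A}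

theorem apply_map_map_of_offDiag [Zero A] (hdiag : ∀ x, f (x, x) = 0)
    (hoff : ∀ x y, x ≠ y → f (x, y) = c) {g : X → X} (hg : Function.Injective g) (y z : X) :
    f (g y, g z) = f (y, z) := by
  obtain rfl | hyz := eq_or_ne y z
  · rw [hdiag, hdiag]
  · rw [hoff y z hyz, hoff _ _ (hg.ne hyz)]

theorem isTwoCocycle_of_offDiag [AddCommMonoid A] (hop : ∀ x, Function.Injective (op x))
    (hdiag : ∀ x, f (x, x) = 0) (hoff : ∀ x y, x ≠ y → f (x, y) = c) : IsTwoCocycle op f := by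
  intro x y z
  rw [apply_map_map_of_offDiag hdiag hoff (hop x), apply_map_map_of_offDiag hdiag hoff (hop y),
    add_comm]

theorem curry_injective_of_offDiag [Zero A] (hc : c ≠ 0) (hdiag : ∀ x, f (x, x) = 0)
    (hoff : ∀ x y, x ≠ y → f (x, y) = c) : Function.Injective (Function.curry f) := by
  intro x y hxy
  by_contra hne
  exact hc <| calc
    c = f (x, y) := (hoff x y hne).symm
    _ = f (y, y) := congrFun hxy y
    _ = 0 := hdiag y

end OffDiagonal

theorem statement_16_general {X : Type u} {A : Type v} [AddCommGroup A] {op : X → X → X}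
    (hbij : ∀ a, Function.Bijective (op a))
    (hcyc : ∀ a b c, op (op a b) (op a c) = op (op b a) (op b c))
    {m : ℕ} (hm : IsMPLevel X op m) {c : A} (hc : c ≠ 0) {f : X × X → A}
    (hdiag : ∀ x, f (x, x) = 0) (hoff : ∀ x y, x ≠ y → f (x, y) = c) :
    IsTwoCocycle op f ∧
    (∀ u, Function.Bijective (extOp op f u)) ∧
    (∀ u v w, extOp op f (extOp op f u v) (extOp op f u w) =
      extOp op f (extOp op f v u) (extOp op f v w)) ∧
    ((∀ x, op x x = x) → ∀ u, extOp op f u u = u) ∧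
    IsMPLevel (A × X) (extOp op f) (m + 1) ∧
    ∃ e : Quotient (retSetoid (extOp op f)) ≃ X,
      (∀ u, e (Quotient.mk _ u) = u.2) ∧ Function.Semiconj₂ e (retOp (extOp op f)) op := by
  have : Nontrivial A := nontrivial_of_ne c 0 hc
  have hop : IsSurjCycleSet op := ⟨fun a => (hbij a).surjective, hcyc⟩
  have hf : IsTwoCocycle op f := isTwoCocycle_of_offDiag (fun a => (hbij a).injective) hdiag hoff
  have hf_inj : Function.Injective (Function.curry f) := curry_injective_of_offDiag hc hdiag hoff
  have hext : IsSurjCycleSet (extOp op f) := hop.extOp hf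
  exact ⟨hf, fun u => ⟨extOp_injective (hbij u.2).injective, hext.surjective u⟩, hext.cycle,
    fun hsq u => extOp_self (hdiag u.2) (hsq u.2), hm.extOp hop hf hf_inj,
    retExtEquiv op hf_inj, retExtEquiv_mk hf_inj, semiconj₂_retExtEquiv hf_inj hext⟩

/-- A square-free multipermutation cycle set of level `m` and
size `N` admits, via the 2-cocycle `f(x,y) = δ_{x≠y} ∈ ℤ/2ℤ`, an extension
`ℤ/2ℤ ×_f X` of size `2N` which is a square-free multipermutation cycle set of
level `m+1`, and whose retraction is isomorphic (via the projection) to `X`. -/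
theorem statement_16 {X : Type u} [Finite X] (op : X → X → X)
    (hbij : ∀ a : X, Function.Bijective (op a))
    (hcyc : ∀ a b c : X, op (op a b) (op a c) = op (op b a) (op b c))
    (hsqfree : ∀ a : X, op a a = a)
    (N m : ℕ) (hN : Nat.card X = N)
    (hMP : IsMPLevel X op m)
    (f : X × X → ZMod 2)
    (hf1 : ∀ x : X, f (x, x) = 0)
    (hf2 : ∀ x y : X, x ≠ y → f (x, y) = 1)
    (opY : ZMod 2 × X → ZMod 2 × X → ZMod 2 × X)
    (hopY : ∀ u v : ZMod 2 × X, opY u v = (v.1 + f (u.2, v.2), op u.2 v.2)) :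
    (∀ x y z : X,
      f (x, z) + f (op x y, op x z) = f (y, z) + f (op y x, op y z)) ∧
    (∀ u : ZMod 2 × X, Function.Bijective (opY u)) ∧
    (∀ u v w : ZMod 2 × X,
      opY (opY u v) (opY u w) = opY (opY v u) (opY v w)) ∧
    (∀ u : ZMod 2 × X, opY u u = u) ∧
    Nat.card (ZMod 2 × X) = 2 * N ∧
    IsMPLevel (ZMod 2 × X) opY (m + 1) ∧
    ∃ e : Quotient (retSetoid opY) ≃ X,
      (∀ u : ZMod 2 × X, e (Quotient.mk (retSetoid opY) u) = u.2) ∧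
      (∀ q q', e (retOp opY q q') = op (e q) (e q')) := by
  obtain rfl : opY = extOp op f := funext₂ hopY
  obtain ⟨hcoc, hbijY, hcycY, hsqY, hmY, hret⟩ :=
    statement_16_general hbij hcyc hMP one_ne_zero hf1 hf2
  exact ⟨hcoc, hbijY, hcycY, hsqY hsqfree, by rw [Nat.card_prod, Nat.card_zmod, hN], hmY, hret⟩
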